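/- arXiv:2410.23216 — 6 statements merged into one kernel-verified Lean document; each statement's English description precedes it below -/
import Mathlib

section
/- Let n and k be positive integers. There exists a Heffter array H(n;k) — that is, an n×n partially filled array with entries in Z_{2nk+1} such that every row and every column contains exactly k filled cells, the filled entries of every row and of every column sum to 0 in Z_{2nk+1}, and for every nonzero x in Z_{2nk+1} exactly one cell of the array contains x or -x — if and only if 3 ≤ k ≤ n. -/
def HB (N n k v1 v2 G : ℕ) [NeZero n] : Prop :=
  ∃ E : ℕ → Fin n → ZMod (2 * N + 1),
    (∀ i, ∑ d ∈ Finset.range k, E d i = 0) ∧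
    (∀ j, ∑ d ∈ Finset.range k, E d (j - Fin.ofNat n d) = 0) ∧
    ∀ y : ℕ, 1 ≤ y → y ≤ N → (v1 ≤ y ∧ y < v1 + G) ∨ (v2 ≤ y ∧ y < v2 + G) ∨
      ∃ d < k, ∃ i, E d i = (y : ZMod (2 * N + 1)) ∨ E d i = -(y : ZMod (2 * N + 1))

theorem ofNat_add_aux (n a b : ℕ) [NeZero n] :
    Fin.ofNat n (a + b) = Fin.ofNat n a + Fin.ofNat n b := by
  apply Fin.ext
  simp [Fin.val_add]

theorem HB_step (N n k v1 v2 G : ℕ) [NeZero n] (h : HB N n k v1 v2 (2 * n + G)) :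
    HB N n (k + 4) (v1 + 2 * n) (v2 + 2 * n) G := by
  obtain ⟨E, hr, hc, hy⟩ := h
  let P : Fin n → ZMod (2 * N + 1) := fun i => (i.val : ZMod (2 * N + 1))
  let E' : ℕ → Fin n → ZMod (2 * N + 1) := fun d i =>
    if d < k then E d i
    else if d = k then v1 + P (i + Fin.ofNat n k)
    else if d = k + 1 then -(v1 + n + P (i + Fin.ofNat n k))
    else if d = k + 2 then -(v2 + P (i + Fin.ofNat n k + Fin.ofNat n 2))
    else v2 + n + P (i + Fin.ofNat n k + Fin.ofNat n 2)
  have e0 : ∀ i, E' k i = v1 + P (i + Fin.ofNat n k) := by intro i; simp [E']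
  have e1 : ∀ i, E' (k + 1) i = -(v1 + n + P (i + Fin.ofNat n k)) := by intro i; simp [E']
  have e2 : ∀ i, E' (k + 2) i = -(v2 + P (i + Fin.ofNat n k + Fin.ofNat n 2)) := by
    intro i; simp [E']
  have e3 : ∀ i, E' (k + 3) i = v2 + n + P (i + Fin.ofNat n k + Fin.ofNat n 2) := by
    intro i; simp [E']
  have el : ∀ d i, d < k → E' d i = E d i := by intro d i hd; simp [E', hd]
  refine ⟨E', ?_, ?_, ?_⟩
  · intro i
    rw [show k + 4 = k + 1 + 1 + 1 + 1 from rfl, Finset.sum_range_succ, Finset.sum_range_succ,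
      Finset.sum_range_succ, Finset.sum_range_succ,
      Finset.sum_congr rfl (fun d hd => el d i (Finset.mem_range.mp hd)), hr i, e0, e1, e2, e3]
    ring
  · intro j
    rw [show k + 4 = k + 1 + 1 + 1 + 1 from rfl, Finset.sum_range_succ, Finset.sum_range_succ,
      Finset.sum_range_succ, Finset.sum_range_succ,
      Finset.sum_congr rfl (fun d hd => el d _ (Finset.mem_range.mp hd)), hc j, e0, e1, e2, e3]
    have a0 : j - Fin.ofNat n k + Fin.ofNat n k = j := by abel
    have a1 : j - Fin.ofNat n (k + 1) + Fin.ofNat n k = j - Fin.ofNat n 1 := by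
      rw [ofNat_add_aux]; abel
    have a2 : j - Fin.ofNat n (k + 1 + 1) + Fin.ofNat n k + Fin.ofNat n 2 = j := by
      rw [show k + 1 + 1 = k + 2 from rfl, ofNat_add_aux]; abel
    have a3 : j - Fin.ofNat n (k + 1 + 1 + 1) + Fin.ofNat n k + Fin.ofNat n 2
        = j - Fin.ofNat n 1 := by
      rw [show k + 1 + 1 + 1 = k + 2 + 1 from rfl, ofNat_add_aux, ofNat_add_aux]; abel
    rw [a0, a1, a2, a3]
    ring
  · intro y h1 h2
    have key : ∀ (s : Fin n) (v : ℕ), v ≤ y → y < v + n →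
        ∃ i : Fin n, (y : ZMod (2 * N + 1)) = v + P (i + s) := by
      intro s v h3 h4
      refine ⟨⟨y - v, by omega⟩ - s, ?_⟩
      have : (y : ZMod (2 * N + 1)) = ((v + (y - v) : ℕ) : ZMod (2 * N + 1)) := by
        congr 1; omega
      rw [this]; simp [P]
    have key' : ∀ d < k + 4, (∃ i, E' d i = (y : ZMod (2 * N + 1)) ∨ E' d i = -(y : ZMod (2 * N + 1)))
      → ∃ d < k + 4, ∃ i, E' d i = (y : ZMod (2 * N + 1)) ∨ E' d i = -(y : ZMod (2 * N + 1)) :=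
      fun d hd h => ⟨d, hd, h⟩
    rcases hy y h1 h2 with h | h | ⟨d, hd, i, h⟩
    · by_cases c1 : y < v1 + n
      · right; right
        obtain ⟨i, hi⟩ := key (Fin.ofNat n k) v1 h.1 c1
        refine ⟨k, by omega, i, Or.inl ?_⟩
        rw [e0, hi]
      by_cases c2 : y < v1 + n + n
      · right; right
        obtain ⟨i, hi⟩ := key (Fin.ofNat n k) (v1 + n) (by omega) c2
        refine ⟨k + 1, by omega, i, Or.inr ?_⟩
        rw [e1, hi]; push_cast; ring
      left; omega
    · by_cases c1 : y < v2 + n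
      · right; right
        obtain ⟨i, hi⟩ := key (Fin.ofNat n k + Fin.ofNat n 2) v2 h.1 c1
        refine ⟨k + 2, by omega, i, Or.inr ?_⟩
        rw [e2, hi, add_assoc i]
      by_cases c2 : y < v2 + n + n
      · right; right
        obtain ⟨i, hi⟩ := key (Fin.ofNat n k + Fin.ofNat n 2) (v2 + n) (by omega) c2
        refine ⟨k + 3, by omega, i, Or.inl ?_⟩
        rw [e3, hi, add_assoc i]; push_cast; ring
      right; left; omega
    · right; right
      exact ⟨d, by omega, i, by rw [el d i hd]; exact h⟩

theorem HB_iter (N n : ℕ) [NeZero n] (m : ℕ) : ∀ k v1 v2, HB N n k v1 v2 (2 * n * m) →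
    HB N n (k + 4 * m) (v1 + 2 * n * m) (v2 + 2 * n * m) 0 := by
  induction m with
  | zero => intro k v1 v2 h; simpa using h
  | succ m ih =>
    intro k v1 v2 h
    have h' := HB_step N n k v1 v2 (2 * n * m) (by
      rw [show 2 * n + 2 * n * m = 2 * n * (m + 1) by ring]; exact h)
    have := ih _ _ _ h'
    rw [show k + 4 * (m + 1) = k + 4 + 4 * m by ring,
      show v1 + 2 * n * (m + 1) = v1 + 2 * n + 2 * n * m by ring,
      show v2 + 2 * n * (m + 1) = v2 + 2 * n + 2 * n * m by ring]
    exact this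

def HA (n k : ℕ) : Prop :=
  ∃ A : Fin n → Fin n → Option (ZMod (2 * n * k + 1)),
      (∀ i : Fin n, (Finset.univ.filter fun j : Fin n => (A i j).isSome).card = k) ∧
      (∀ j : Fin n, (Finset.univ.filter fun i : Fin n => (A i j).isSome).card = k) ∧
      (∀ i : Fin n, ∑ j : Fin n, (A i j).getD 0 = 0) ∧
      (∀ j : Fin n, ∑ i : Fin n, (A i j).getD 0 = 0) ∧
      (∀ x : ZMod (2 * n * k + 1), x ≠ 0 →
        ∃! p : Fin n × Fin n, A p.1 p.2 = some x ∨ A p.1 p.2 = some (-x))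

theorem sum_fin_lt {R : Type*} [AddCommMonoid R] (n k : ℕ) (hk : k ≤ n) (f : ℕ → R) :
    ∑ d : Fin n, (if d.val < k then f d.val else 0) = ∑ d ∈ Finset.range k, f d := by
  rw [Fin.sum_univ_eq_sum_range (fun d => if d < k then f d else 0) n, ← Finset.sum_filter]
  congr 1
  ext d; simp; omega

theorem HA_of_HB (n k v1 v2 : ℕ) [NeZero n] (hk : k ≤ n) (h : HB (n * k) n k v1 v2 0) :
    HA n k := by
  unfold HA
  rw [show 2 * n * k + 1 = 2 * (n * k) + 1 by ring]
  obtain ⟨E, hr, hc, hy⟩ := h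
  have hy' : ∀ y : ℕ, 1 ≤ y → y ≤ n * k → ∃ d < k, ∃ i,
      E d i = (y : ZMod (2 * (n * k) + 1)) ∨ E d i = -(y : ZMod (2 * (n * k) + 1)) := by
    intro y h1 h2
    rcases hy y h1 h2 with h | h | h
    · omega
    · omega
    · exact h
  -- counting
  let φ : Fin k × Fin n → ℕ := fun p => (E p.1 p.2).valMinAbs.natAbs
  have hval : ∀ y : ℕ, y ≤ n * k → ((y : ZMod (2 * (n * k) + 1))).valMinAbs.natAbs = y := by
    intro y h2
    rw [ZMod.valMinAbs_natAbs_eq_min, ZMod.val_natCast_of_lt (by omega)]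
    omega
  have himg : Finset.Icc 1 (n * k) ⊆ Finset.univ.image φ := by
    intro y hyy
    rw [Finset.mem_Icc] at hyy
    obtain ⟨d, hd, i, h⟩ := hy' y hyy.1 hyy.2
    rw [Finset.mem_image]
    refine ⟨(⟨d, hd⟩, i), Finset.mem_univ _, ?_⟩
    rcases h with h | h
    · simp only [φ, h]; exact hval y hyy.2
    · simp only [φ, h]; rw [ZMod.natAbs_valMinAbs_neg]; exact hval y hyy.2
  have hinj : Set.InjOn φ (Finset.univ : Finset (Fin k × Fin n)) := by
    apply Finset.injOn_of_card_image_eq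
    apply le_antisymm Finset.card_image_le
    calc _ = (Finset.Icc 1 (n * k)).card := by simp [mul_comm]
      _ ≤ _ := Finset.card_le_card himg
  have hsum : ∀ x : ZMod (2 * (n * k) + 1), x ≠ 0 → ∃ p : Fin k × Fin n, E p.1 p.2 = x ∨ E p.1 p.2 = -x := by
    intro x hx
    have hb := ZMod.natAbs_valMinAbs_le x
    have h0 : x.valMinAbs ≠ 0 := by rwa [Ne, ZMod.valMinAbs_eq_zero]
    obtain ⟨d, hd, i, h⟩ := hy' x.valMinAbs.natAbs (by omega) (by omega)
    refine ⟨(⟨d, hd⟩, i), ?_⟩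
    have hx' : ((x.valMinAbs : ℤ) : ZMod (2 * (n * k) + 1)) = x := ZMod.coe_valMinAbs x
    rcases Int.natAbs_eq x.valMinAbs with h3 | h3
    · have : ((x.valMinAbs.natAbs : ℕ) : ZMod (2 * (n * k) + 1)) = x := by
        have h4 := congrArg (fun z : ℤ => (z : ZMod (2 * (n * k) + 1))) h3
        simp only [Int.cast_natCast] at h4
        rw [← h4, hx']
      rw [this] at h; exact h
    · have : ((x.valMinAbs.natAbs : ℕ) : ZMod (2 * (n * k) + 1)) = -x := by
        have h4 := congrArg (fun z : ℤ => (z : ZMod (2 * (n * k) + 1))) h3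
        simp only [Int.cast_natCast, Int.cast_neg] at h4
        rw [hx'] at h4
        exact (neg_eq_iff_eq_neg.mpr h4).symm
      rw [this, neg_neg] at h; exact h.symm
  have huniq : ∀ (x : ZMod (2 * (n * k) + 1)) (p p' : Fin k × Fin n),
      (E p.1 p.2 = x ∨ E p.1 p.2 = -x) → (E p'.1 p'.2 = x ∨ E p'.1 p'.2 = -x) → p = p' := by
    intro x p p' h h'
    apply hinj (Finset.mem_coe.2 (Finset.mem_univ p)) (Finset.mem_coe.2 (Finset.mem_univ p'))
    have aux : ∀ p : Fin k × Fin n, (E p.1 p.2 = x ∨ E p.1 p.2 = -x) → φ p = x.valMinAbs.natAbs := by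
      intro p h
      rcases h with h | h
      · simp only [φ, h]
      · simp only [φ, h]; exact ZMod.natAbs_valMinAbs_neg x
    rw [aux p h, aux p' h']
  let A : Fin n → Fin n → Option (ZMod (2 * (n * k) + 1)) := fun i j =>
    if (j - i).val < k then some (E (j - i).val i) else none
  have hsome : ∀ i j, (A i j).isSome ↔ (j - i).val < k := by
    intro i j; simp only [A]; split_ifs with h <;> simp [h]
  have hget : ∀ i j, (A i j).getD 0 = if (j - i).val < k then E (j - i).val i else 0 := by
    intro i j; simp only [A]; split_ifs with h <;> simp
  have hcard : (Finset.univ.filter fun d : Fin n => d.val < k).card = k := by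
    rw [Finset.card_filter, sum_fin_lt n k hk (fun _ => 1)]; simp
  refine ⟨A, ?_, ?_, ?_, ?_, ?_⟩
  · intro i
    simp only [hsome]
    refine Eq.trans ?_ hcard
    rw [Finset.card_filter, Finset.card_filter]
    exact Fintype.sum_equiv (Equiv.subRight i) _ _ (fun j => by simp)
  · intro j
    simp only [hsome]
    refine Eq.trans ?_ hcard
    rw [Finset.card_filter, Finset.card_filter]
    exact Fintype.sum_equiv (Equiv.subLeft j) _ _ (fun j => by simp)
  · intro i
    simp only [hget]
    rw [Fintype.sum_equiv (Equiv.subRight i) (fun j => if (j - i).val < k then E (j - i).val i else 0)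
      (fun d => if d.val < k then E d.val i else 0) (fun j => by simp)]
    rw [sum_fin_lt n k hk (fun d => E d i)]
    exact hr i
  · intro j
    simp only [hget]
    rw [Fintype.sum_equiv (Equiv.subLeft j) (fun i => if (j - i).val < k then E (j - i).val i else 0)
      (fun d => if d.val < k then E d.val (j - Fin.ofNat n d.val) else 0) (fun i => by simp)]
    rw [sum_fin_lt n k hk (fun d => E d (j - Fin.ofNat n d))]
    exact hc j
  · intro x hx
    obtain ⟨⟨d, i⟩, h⟩ := hsum x hx
    have hd : Fin.val (Fin.ofNat n d.val) = d.val := by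
      have := d.2
      simp only [Fin.val_ofNat]; exact Nat.mod_eq_of_lt (by omega)
    have hA : A i (i + Fin.ofNat n d.val) = some (E d i) := by
      simp only [A]
      rw [add_sub_cancel_left, hd, if_pos d.2]
    refine ⟨(i, i + Fin.ofNat n d.val), ?_, ?_⟩
    · simp only [hA, Option.some.injEq]; exact h
    · rintro ⟨i', j'⟩ h'
      have hlt : (j' - i').val < k := by
        rw [← hsome]
        rcases h' with h' | h' <;> simp only at h' <;> simp [h']
      simp only [A, if_pos hlt, Option.some.injEq] at h'
      have := huniq x (⟨(j' - i').val, hlt⟩, i') (d, i) h' h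
      rw [Prod.mk.injEq] at this
      obtain ⟨t1, t2⟩ := this
      subst t2
      rw [Prod.mk.injEq]
      refine ⟨rfl, ?_⟩
      rw [← t1]; simp

theorem cast_aux (N : ℕ) (z c : ℤ) (y : ℕ)
    (h : z = y + c * (2 * N + 1) ∨ z = -y + c * (2 * N + 1)) :
    (z : ZMod (2 * N + 1)) = y ∨ (z : ZMod (2 * N + 1)) = -y := by
  have hM : (2 * (N : ZMod (2 * N + 1)) + 1) = 0 := by
    have := ZMod.natCast_self (2 * N + 1)
    push_cast at this; exact this
  rcases h with h | h
  · left; rw [h]; push_cast; rw [hM]; ring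
  · right; rw [h]; push_cast; rw [hM]; ring

theorem fin_succ_val (n x : ℕ) [NeZero n] (hx : x < n) :
    ((⟨x, hx⟩ : Fin n) + Fin.ofNat n 1).val = if x + 1 < n then x + 1 else 0 := by
  rw [Fin.val_add]
  simp only [Fin.val_ofNat, Nat.add_mod_mod]
  split_ifs with h
  · exact Nat.mod_eq_of_lt h
  · rw [show x + 1 = n by omega, Nat.mod_self]

theorem HB_tri (N n v1 v2 G : ℕ) [NeZero n] (b : ℕ → ℤ) (K : ℤ)
    (cov : ∀ y : ℕ, 1 ≤ y → y ≤ N → (v1 ≤ y ∧ y < v1 + G) ∨ (v2 ≤ y ∧ y < v2 + G) ∨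
      ∃ x < n, ∃ z c : ℤ, (z = b x ∨ z = b x + K ∨ (x + 1 < n ∧ z = b x + b (x + 1) + K) ∨
        (x + 1 = n ∧ z = b x + b 0 + K)) ∧
        (z = y + c * (2 * N + 1) ∨ z = -y + c * (2 * N + 1))) : HB N n 3 v1 v2 G := by
  let B : Fin n → ZMod (2 * N + 1) := fun i => ((b i.val : ℤ) : ZMod (2 * N + 1))
  let E : ℕ → Fin n → ZMod (2 * N + 1) := fun d i =>
    if d = 0 then B i else if d = 1 then -(B i + B (i + Fin.ofNat n 1) + (K : ℤ))
    else B (i + Fin.ofNat n 1) + (K : ℤ)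
  have e0 : ∀ i, E 0 i = B i := fun i => rfl
  have e1 : ∀ i, E 1 i = -(B i + B (i + Fin.ofNat n 1) + (K : ℤ)) := fun i => rfl
  have e2 : ∀ i, E 2 i = B (i + Fin.ofNat n 1) + (K : ℤ) := fun i => rfl
  refine ⟨E, ?_, ?_, ?_⟩
  · intro i
    simp only [Finset.sum_range_succ, Finset.sum_range_zero, e0, e1, e2]; ring
  · intro j
    simp only [Finset.sum_range_succ, Finset.sum_range_zero, e0, e1, e2]
    have a0 : j - Fin.ofNat n 0 = j := by
      rw [show Fin.ofNat n 0 = 0 from rfl, sub_zero]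
    have a1 : j - Fin.ofNat n 1 + Fin.ofNat n 1 = j := by abel
    have a2 : j - Fin.ofNat n 2 + Fin.ofNat n 1 = j - Fin.ofNat n 1 := by
      rw [show (2 : ℕ) = 1 + 1 from rfl, ofNat_add_aux]; abel
    rw [a0, a1, a2]; ring
  · intro y h1 h2
    rcases cov y h1 h2 with h | h | ⟨x, hx, z, c, hz, hc⟩
    · exact Or.inl h
    · exact Or.inr (Or.inl h)
    right; right
    have hzz := cast_aux N z c y hc
    have hv := fin_succ_val n x hx
    rcases hz with hz | hz | ⟨hx1, hz⟩ | ⟨hx1, hz⟩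
    · refine ⟨0, by omega, ⟨x, hx⟩, ?_⟩
      rw [hz] at hzz; exact hzz
    · refine ⟨2, by omega, ⟨x, hx⟩ - Fin.ofNat n 1, ?_⟩
      rw [e2, show (⟨x, hx⟩ : Fin n) - Fin.ofNat n 1 + Fin.ofNat n 1 = ⟨x, hx⟩ by abel]
      rw [hz] at hzz; push_cast at hzz; exact hzz
    · refine ⟨1, by omega, ⟨x, hx⟩, ?_⟩
      rw [e1]; simp only [B, hv, if_pos hx1]
      rw [hz] at hzz; push_cast at hzz
      rw [neg_eq_iff_eq_neg, neg_inj]; exact hzz.symm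
    · refine ⟨1, by omega, ⟨x, hx⟩, ?_⟩
      rw [e1]; simp only [B, hv, if_neg (show ¬ x + 1 < n by omega)]
      rw [hz] at hzz; push_cast at hzz
      rw [neg_eq_iff_eq_neg, neg_inj]; exact hzz.symm

theorem HB_pent (N n v1 v2 G : ℕ) [NeZero n] (b g : ℕ → ℤ) (K L : ℤ)
    (cov : ∀ y : ℕ, 1 ≤ y → y ≤ N → (v1 ≤ y ∧ y < v1 + G) ∨ (v2 ≤ y ∧ y < v2 + G) ∨
      ∃ x < n, ∃ z c : ℤ, (z = b x ∨ z = g x ∨ (x + 1 < n ∧ z = b x + g (x + 1) - K) ∨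
        (x + 1 = n ∧ z = b x + g 0 - K) ∨ z = g x - b x + L ∨ z = g x - b x + L + K) ∧
        (z = y + c * (2 * N + 1) ∨ z = -y + c * (2 * N + 1))) : HB N n 5 v1 v2 G := by
  let B : Fin n → ZMod (2 * N + 1) := fun i => ((b i.val : ℤ) : ZMod (2 * N + 1))
  let C : Fin n → ZMod (2 * N + 1) := fun i => ((g i.val : ℤ) : ZMod (2 * N + 1))
  let E : ℕ → Fin n → ZMod (2 * N + 1) := fun d i =>
    if d = 0 then B i else if d = 1 then -(B i + C (i + Fin.ofNat n 1) - (K : ℤ))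
    else if d = 2 then C (i + Fin.ofNat n 1)
    else if d = 3 then C (i + Fin.ofNat n 3) - B (i + Fin.ofNat n 3) + (L : ℤ)
    else -(C (i + Fin.ofNat n 3) - B (i + Fin.ofNat n 3) + (L : ℤ) + (K : ℤ))
  have e0 : ∀ i, E 0 i = B i := fun i => rfl
  have e1 : ∀ i, E 1 i = -(B i + C (i + Fin.ofNat n 1) - (K : ℤ)) := fun i => rfl
  have e2 : ∀ i, E 2 i = C (i + Fin.ofNat n 1) := fun i => rfl
  have e3 : ∀ i, E 3 i = C (i + Fin.ofNat n 3) - B (i + Fin.ofNat n 3) + (L : ℤ) := fun i => rfl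
  have e4 : ∀ i, E 4 i = -(C (i + Fin.ofNat n 3) - B (i + Fin.ofNat n 3) + (L : ℤ) + (K : ℤ)) :=
    fun i => rfl
  refine ⟨E, ?_, ?_, ?_⟩
  · intro i
    simp only [Finset.sum_range_succ, Finset.sum_range_zero, e0, e1, e2, e3, e4]; ring
  · intro j
    simp only [Finset.sum_range_succ, Finset.sum_range_zero, e0, e1, e2, e3, e4]
    have a0 : j - Fin.ofNat n 0 = j := by
      rw [show Fin.ofNat n 0 = 0 from rfl, sub_zero]
    have a1 : j - Fin.ofNat n 1 + Fin.ofNat n 1 = j := by abel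
    have a2 : j - Fin.ofNat n 2 + Fin.ofNat n 1 = j - Fin.ofNat n 1 := by
      rw [show (2 : ℕ) = 1 + 1 from rfl, ofNat_add_aux]; abel
    have a3 : j - Fin.ofNat n 3 + Fin.ofNat n 3 = j := by abel
    have a4 : j - Fin.ofNat n 4 + Fin.ofNat n 3 = j - Fin.ofNat n 1 := by
      rw [show (4 : ℕ) = 3 + 1 from rfl, ofNat_add_aux]; abel
    rw [a0, a1, a2, a3, a4]; ring
  · intro y h1 h2
    rcases cov y h1 h2 with h | h | ⟨x, hx, z, c, hz, hc⟩
    · exact Or.inl h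
    · exact Or.inr (Or.inl h)
    right; right
    have hzz := cast_aux N z c y hc
    have hv := fin_succ_val n x hx
    rcases hz with hz | hz | ⟨hx1, hz⟩ | ⟨hx1, hz⟩ | hz | hz
    · refine ⟨0, by omega, ⟨x, hx⟩, ?_⟩
      rw [hz] at hzz; exact hzz
    · refine ⟨2, by omega, ⟨x, hx⟩ - Fin.ofNat n 1, ?_⟩
      rw [e2, show (⟨x, hx⟩ : Fin n) - Fin.ofNat n 1 + Fin.ofNat n 1 = ⟨x, hx⟩ by abel]
      rw [hz] at hzz; exact hzz
    · refine ⟨1, by omega, ⟨x, hx⟩, ?_⟩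
      rw [e1]; simp only [B, C, hv, if_pos hx1]
      rw [hz] at hzz; push_cast at hzz
      rw [neg_eq_iff_eq_neg, neg_inj]; exact hzz.symm
    · refine ⟨1, by omega, ⟨x, hx⟩, ?_⟩
      rw [e1]; simp only [B, C, hv, if_neg (show ¬ x + 1 < n by omega)]
      rw [hz] at hzz; push_cast at hzz
      rw [neg_eq_iff_eq_neg, neg_inj]; exact hzz.symm
    · refine ⟨3, by omega, ⟨x, hx⟩ - Fin.ofNat n 3, ?_⟩
      rw [e3, show (⟨x, hx⟩ : Fin n) - Fin.ofNat n 3 + Fin.ofNat n 3 = ⟨x, hx⟩ by abel]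
      rw [hz] at hzz; push_cast at hzz; exact hzz
    · refine ⟨4, by omega, ⟨x, hx⟩ - Fin.ofNat n 3, ?_⟩
      rw [e4, show (⟨x, hx⟩ : Fin n) - Fin.ofNat n 3 + Fin.ofNat n 3 = ⟨x, hx⟩ by abel]
      rw [hz] at hzz; push_cast at hzz
      rw [neg_eq_iff_eq_neg, neg_inj]; exact hzz.symm

theorem HB_zero (n G : ℕ) [NeZero n] : HB (2 * G) n 0 1 (1 + G) G := by
  refine ⟨fun _ _ => 0, by simp, by simp, ?_⟩
  intro y h1 h2
  omega

theorem HB_six (n G : ℕ) [NeZero n] : HB (6 * n + 2 * G) n 6 (4 * n + 1) (4 * n + 1 + G) G := by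
  obtain ⟨N, hN⟩ : ∃ N, N = 6 * n + 2 * G := ⟨_, rfl⟩
  rw [← hN]
  have hM : (2 * (N : ZMod (2 * N + 1)) + 1) = 0 := by
    have := ZMod.natCast_self (2 * N + 1)
    push_cast at this; exact this
  let P : Fin n → ZMod (2 * N + 1) := fun i => (i.val : ZMod (2 * N + 1))
  let E : ℕ → Fin n → ZMod (2 * N + 1) := fun d i =>
    if d = 0 then 1 + P i else if d = 1 then N - P i
    else if d = 2 then n + 1 + P (i + Fin.ofNat n 2)
    else if d = 3 then N - n - P (i + Fin.ofNat n 2)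
    else if d = 4 then -(2 * n + 2 + 2 * P (i + Fin.ofNat n 4))
    else 2 * n + 1 + 2 * P (i + Fin.ofNat n 4)
  have e0 : ∀ i, E 0 i = 1 + P i := fun i => rfl
  have e1 : ∀ i, E 1 i = N - P i := fun i => rfl
  have e2 : ∀ i, E 2 i = n + 1 + P (i + Fin.ofNat n 2) := fun i => rfl
  have e3 : ∀ i, E 3 i = N - n - P (i + Fin.ofNat n 2) := fun i => rfl
  have e4 : ∀ i, E 4 i = -(2 * n + 2 + 2 * P (i + Fin.ofNat n 4)) := fun i => rfl
  have e5 : ∀ i, E 5 i = 2 * n + 1 + 2 * P (i + Fin.ofNat n 4) := fun i => rfl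
  refine ⟨E, ?_, ?_, ?_⟩
  · intro i
    simp only [Finset.sum_range_succ, Finset.sum_range_zero, e0, e1, e2, e3, e4, e5]
    linear_combination hM
  · intro j
    simp only [Finset.sum_range_succ, Finset.sum_range_zero, e0, e1, e2, e3, e4, e5]
    have a0 : j - Fin.ofNat n 0 = j := by
      rw [show Fin.ofNat n 0 = 0 from rfl, sub_zero]
    have a2 : j - Fin.ofNat n 2 + Fin.ofNat n 2 = j := by abel
    have a3 : j - Fin.ofNat n 3 + Fin.ofNat n 2 = j - Fin.ofNat n 1 := by
      rw [show (3 : ℕ) = 2 + 1 from rfl, ofNat_add_aux]; abel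
    have a4 : j - Fin.ofNat n 4 + Fin.ofNat n 4 = j := by abel
    have a5 : j - Fin.ofNat n 5 + Fin.ofNat n 4 = j - Fin.ofNat n 1 := by
      rw [show (5 : ℕ) = 4 + 1 from rfl, ofNat_add_aux]; abel
    rw [a0, a2, a3, a4, a5]
    linear_combination hM
  · intro y h1 h2
    have key : ∀ (s : Fin n) (v : ℕ) (hv : v < n), P (⟨v, hv⟩ - s + s) = v := by
      intro s v hv; simp [P]
    by_cases c0 : y ≤ n
    · right; right
      refine ⟨0, by omega, ⟨y - 1, by omega⟩, Or.inl ?_⟩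
      rw [e0]; simp only [P]; push_cast [h1]; ring
    by_cases c1 : y ≤ 2 * n
    · right; right
      refine ⟨2, by omega, ⟨y - (n + 1), by omega⟩ - Fin.ofNat n 2, Or.inl ?_⟩
      rw [e2, key]; push_cast [show n + 1 ≤ y by omega]; ring
    by_cases c2 : y ≤ 4 * n
    · right; right
      obtain ⟨t, ht | ht⟩ : ∃ t, y = 2 * n + 1 + 2 * t ∨ y = 2 * n + 2 + 2 * t :=
        ⟨(y - (2 * n + 1)) / 2, by omega⟩
      · refine ⟨5, by omega, ⟨t, by omega⟩ - Fin.ofNat n 4, Or.inl ?_⟩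
        rw [e5, key, ht]; push_cast; ring
      · refine ⟨4, by omega, ⟨t, by omega⟩ - Fin.ofNat n 4, Or.inr ?_⟩
        rw [e4, key, ht]; push_cast; ring
    by_cases c3 : N < y + n
    · right; right
      refine ⟨1, by omega, ⟨N - y, by omega⟩, Or.inl ?_⟩
      rw [e1]; simp only [P]; push_cast [h2]; ring
    by_cases c4 : N < y + 2 * n
    · right; right
      refine ⟨3, by omega, ⟨N - n - y, by omega⟩ - Fin.ofNat n 2, Or.inl ?_⟩
      rw [e3, key]
      have : ((N - n - y : ℕ) : ZMod (2 * N + 1)) = N - n - y := by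
        rw [Nat.cast_sub (by omega), Nat.cast_sub (by omega)]
      rw [this]; ring
    omega

theorem HA_of_base (n k0 m : ℕ) [NeZero n] (hk : k0 + 4 * m ≤ n)
    (h : ∀ G, ∃ v1 v2, HB (k0 * n + 2 * G) n k0 v1 v2 G) : HA n (k0 + 4 * m) := by
  obtain ⟨v1, v2, h⟩ := h (2 * n * m)
  have := HB_iter _ n m k0 v1 v2 h
  rw [show k0 * n + 2 * (2 * n * m) = n * (k0 + 4 * m) by ring] at this
  exact HA_of_HB n _ _ _ hk this

theorem HA_nec (n k : ℕ) (hn : 0 < n) (hk : 0 < k) (h : HA n k) : 3 ≤ k ∧ k ≤ n := by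
  obtain ⟨A, h1, h2, h3, h4, h5⟩ := h
  have hkn : k ≤ n := by
    rw [← h1 ⟨0, hn⟩]
    exact (Finset.card_filter_le _ _).trans (by simp)
  refine ⟨?_, hkn⟩
  by_contra hlt
  have hM : 1 < 2 * n * k + 1 := by
    have := Nat.mul_pos hn hk
    have h2 : 2 * n * k = 2 * (n * k) := by ring
    omega
  have : Fact (1 < 2 * n * k + 1) := ⟨hM⟩
  have h10 : (1 : ZMod (2 * n * k + 1)) ≠ 0 := one_ne_zero
  obtain ⟨⟨i, j⟩, hp, hu⟩ := h5 1 h10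
  obtain ⟨x, hx, hx0, hu'⟩ : ∃ x : ZMod (2 * n * k + 1), A i j = some x ∧ x ≠ 0 ∧
      ∀ p : Fin n × Fin n, (A p.1 p.2 = some x ∨ A p.1 p.2 = some (-x)) → p = (i, j) := by
    rcases hp with hp | hp
    · exact ⟨1, hp, h10, hu⟩
    · refine ⟨-1, hp, by simp, fun p h => hu p ?_⟩
      rw [neg_neg] at h; exact h.symm
  have hmem : j ∈ Finset.univ.filter fun j : Fin n => (A i j).isSome := by
    simp [hx]
  have hs : ∑ j ∈ Finset.univ.filter (fun j : Fin n => (A i j).isSome), (A i j).getD 0 = 0 := by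
    rw [← h3 i, Finset.sum_filter]
    apply Finset.sum_congr rfl
    intro j _
    cases A i j <;> simp
  have hc := h1 i
  obtain hk1 | hk2 : k = 1 ∨ k = 2 := by omega
  · replace hc := hc.trans hk1
    rw [Finset.card_eq_one] at hc
    obtain ⟨a, ha⟩ := hc
    rw [ha] at hmem hs
    rw [Finset.mem_singleton] at hmem
    rw [Finset.sum_singleton, ← hmem, hx] at hs
    exact hx0 (by simpa using hs)
  · have he : ((Finset.univ.filter fun j : Fin n => (A i j).isSome).erase j).card = 1 := by
      rw [Finset.card_erase_of_mem hmem, hc, hk2]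
    rw [Finset.card_eq_one] at he
    obtain ⟨a, ha⟩ := he
    have hs' := Finset.add_sum_erase _ (fun j => (A i j).getD 0) hmem
    rw [hs, ha, Finset.sum_singleton, hx] at hs'
    have ham : a ∈ (Finset.univ.filter fun j : Fin n => (A i j).isSome).erase j := by
      rw [ha]; simp
    rw [Finset.mem_erase, Finset.mem_filter] at ham
    obtain ⟨ha1, -, ha2⟩ := ham
    obtain ⟨w, hw⟩ := Option.isSome_iff_exists.mp ha2
    rw [hw] at hs'
    simp only [Option.getD_some] at hs'
    have hww : w = -x := by linear_combination hs'
    have := hu' (i, a) (Or.inr (by simp only [hw, hww]))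
    exact ha1 (Prod.mk.inj this).2

theorem tri_0 (q G : ℕ) (hq : 1 ≤ q) [NeZero (4 * q)] :
    HB (3 * (4 * q) + 2 * G) (4 * q) 3 (12 * q + 1) (12 * q + 1 + G) G := by
  obtain ⟨b, hb⟩ : ∃ b : ℕ → ℤ, ∀ x, b x = (if x < 2 * q then (if x % 2 = 0 then 8 * q + 1 + (x / 2 : ℕ) else 0 - 11 * q + (x / 2 : ℕ))
      else (if (x - (2 * q)) % 2 = 0 then 2 * q + 1 + ((x - (2 * q)) / 2 : ℕ) else 0 - 10 * q + ((x - (2 * q)) / 2 : ℕ)) : ℤ) := ⟨_, fun _ => rfl⟩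
  refine HB_tri _ _ _ _ _ b (3 * q) ?_
  intro y h1 h2
  by_cases c0 : y < 2 * q
  · exact Or.inr (Or.inr ⟨(y - (1)), by omega, _, 0, Or.inr (Or.inr (Or.inl ⟨by omega, rfl⟩)),
      Or.inl (by simp only [hb]; push_cast; omega)⟩)
  by_cases c1 : y < 2 * q + 1
  · exact Or.inr (Or.inr ⟨(4 * q - (1)), by omega, _, 0, Or.inr (Or.inr (Or.inr (⟨by omega, rfl⟩))),
      Or.inl (by simp only [hb]; push_cast; omega)⟩)
  by_cases c2 : y < 3 * q + 1
  · exact Or.inr (Or.inr ⟨(2 * y - (2 * q + 2)), by omega, _, 0, Or.inl rfl,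
      Or.inl (by simp only [hb]; push_cast; omega)⟩)
  by_cases c3 : y < 5 * q
  · exact Or.inr (Or.inr ⟨(7 * q - (1 + y)), by omega, _, 0, Or.inr (Or.inr (Or.inl ⟨by omega, rfl⟩)),
      Or.inr (by simp only [hb]; push_cast; omega)⟩)
  by_cases c4 : y < 5 * q + 1
  · exact Or.inr (Or.inr ⟨(2 * q - (1)), by omega, _, 0, Or.inr (Or.inr (Or.inl ⟨by omega, rfl⟩)),
      Or.inr (by simp only [hb]; push_cast; omega)⟩)
  by_cases c5 : y < 6 * q + 1
  · exact Or.inr (Or.inr ⟨(2 * y - (8 * q + 2)), by omega, _, 0, Or.inr (Or.inl rfl),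
      Or.inl (by simp only [hb]; push_cast; omega)⟩)
  by_cases c6 : y < 7 * q + 1
  · exact Or.inr (Or.inr ⟨(16 * q + 1 - (2 * y)), by omega, _, 0, Or.inr (Or.inl rfl),
      Or.inr (by simp only [hb]; push_cast; omega)⟩)
  by_cases c7 : y < 8 * q + 1
  · exact Or.inr (Or.inr ⟨(16 * q + 1 - (2 * y)), by omega, _, 0, Or.inr (Or.inl rfl),
      Or.inr (by simp only [hb]; push_cast; omega)⟩)
  by_cases c8 : y < 9 * q + 1
  · exact Or.inr (Or.inr ⟨(2 * y - (16 * q + 2)), by omega, _, 0, Or.inl rfl,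
      Or.inl (by simp only [hb]; push_cast; omega)⟩)
  by_cases c9 : y < 10 * q + 1
  · exact Or.inr (Or.inr ⟨(22 * q + 1 - (2 * y)), by omega, _, 0, Or.inl rfl,
      Or.inr (by simp only [hb]; push_cast; omega)⟩)
  by_cases c10 : y < 11 * q + 1
  · exact Or.inr (Or.inr ⟨(22 * q + 1 - (2 * y)), by omega, _, 0, Or.inl rfl,
      Or.inr (by simp only [hb]; push_cast; omega)⟩)
  by_cases c11 : y < 12 * q + 1
  · exact Or.inr (Or.inr ⟨(2 * y - (22 * q + 2)), by omega, _, 0, Or.inr (Or.inl rfl),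
      Or.inl (by simp only [hb]; push_cast; omega)⟩)
  omega

theorem tri_1 (q G : ℕ) (hq : 1 ≤ q) [NeZero (4 * q + 1)] :
    HB (3 * (4 * q + 1) + 2 * G) (4 * q + 1) 3 (12 * q + 4) (12 * q + 4 + G) G := by
  obtain ⟨b, hb⟩ : ∃ b : ℕ → ℤ, ∀ x, b x = (if x < 2 * q then (if x % 2 = 0 then 6 * q + 2 + (x / 2 : ℕ) else 10 * q + 4 + (x / 2 : ℕ))
      else (if (x - (2 * q)) % 2 = 0 then 9 * q + 3 - ((x - (2 * q)) / 2 : ℕ) else 5 * q + 1 - ((x - (2 * q)) / 2 : ℕ)) : ℤ) := ⟨_, fun _ => rfl⟩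
  refine HB_tri _ _ _ _ _ b (0 - 16 * q - 5) ?_
  intro y h1 h2
  by_cases c0 : y < 2 * q
  · exact Or.inr (Or.inr ⟨(y - (1)), by omega, _, 0, Or.inr (Or.inr (Or.inl ⟨by omega, rfl⟩)),
      Or.inl (by simp only [hb]; push_cast; omega)⟩)
  by_cases c1 : y < 2 * q + 1
  · exact Or.inr (Or.inr ⟨(4 * q), by omega, _, 0, Or.inr (Or.inr (Or.inr (⟨by omega, rfl⟩))),
      Or.inr (by simp only [hb]; push_cast; omega)⟩)
  by_cases c2 : y < 4 * q + 1
  · exact Or.inr (Or.inr ⟨(y - (1)), by omega, _, 0, Or.inr (Or.inr (Or.inl ⟨by omega, rfl⟩)),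
      Or.inr (by simp only [hb]; push_cast; omega)⟩)
  by_cases c3 : y < 4 * q + 2
  · exact Or.inr (Or.inr ⟨(2 * q - (1)), by omega, _, 0, Or.inr (Or.inr (Or.inl ⟨by omega, rfl⟩)),
      Or.inl (by simp only [hb]; push_cast; omega)⟩)
  by_cases c4 : y < 5 * q + 2
  · exact Or.inr (Or.inr ⟨(12 * q + 3 - (2 * y)), by omega, _, 0, Or.inl rfl,
      Or.inl (by simp only [hb]; push_cast; omega)⟩)
  by_cases c5 : y < 6 * q + 2
  · exact Or.inr (Or.inr ⟨(12 * q + 3 - (2 * y)), by omega, _, 0, Or.inr (Or.inl rfl),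
      Or.inr (by simp only [hb]; push_cast; omega)⟩)
  by_cases c6 : y < 7 * q + 2
  · exact Or.inr (Or.inr ⟨(2 * y - (12 * q + 4)), by omega, _, 0, Or.inl rfl,
      Or.inl (by simp only [hb]; push_cast; omega)⟩)
  by_cases c7 : y < 8 * q + 3
  · exact Or.inr (Or.inr ⟨(2 * y - (12 * q + 4)), by omega, _, 0, Or.inr (Or.inl rfl),
      Or.inr (by simp only [hb]; push_cast; omega)⟩)
  by_cases c8 : y < 9 * q + 4
  · exact Or.inr (Or.inr ⟨(20 * q + 6 - (2 * y)), by omega, _, 0, Or.inl rfl,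
      Or.inl (by simp only [hb]; push_cast; omega)⟩)
  by_cases c9 : y < 10 * q + 4
  · exact Or.inr (Or.inr ⟨(20 * q + 6 - (2 * y)), by omega, _, 0, Or.inr (Or.inl rfl),
      Or.inr (by simp only [hb]; push_cast; omega)⟩)
  by_cases c10 : y < 11 * q + 4
  · exact Or.inr (Or.inr ⟨(2 * y - (20 * q + 7)), by omega, _, 0, Or.inl rfl,
      Or.inl (by simp only [hb]; push_cast; omega)⟩)
  by_cases c11 : y < 12 * q + 4
  · exact Or.inr (Or.inr ⟨(2 * y - (20 * q + 7)), by omega, _, 0, Or.inr (Or.inl rfl),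
      Or.inr (by simp only [hb]; push_cast; omega)⟩)
  omega

theorem tri_2 (q G : ℕ) (hq : 1 ≤ q) [NeZero (4 * q + 2)] :
    HB (3 * (4 * q + 2) + 2 * G) (4 * q + 2) 3 (4 * q + 2) (8 * q + 4 + G) G := by
  obtain ⟨b, hb⟩ : ∃ b : ℕ → ℤ, ∀ x, b x = (if x < 2 * q + 1 then (if x % 2 = 0 then 8 * q + 4 + 2 * G + (x / 2 : ℕ) else 0 - 8 * q - 3 - G + (x / 2 : ℕ))
      else if x < 4 * q + 1 then (if (x - (2 * q + 1)) % 2 = 0 then 0 - 5 * q - 3 - G - ((x - (2 * q + 1)) / 2 : ℕ) else 11 * q + 5 + 2 * G - ((x - (2 * q + 1)) / 2 : ℕ))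
      else (6 * q + 3 + G) : ℤ) := ⟨_, fun _ => rfl⟩
  refine HB_tri _ _ _ _ _ b (0 - 4 * q - 2 - G) ?_
  intro y h1 h2
  by_cases c0 : y < 2
  · exact Or.inr (Or.inr ⟨(2 * q), by omega, _, 0, Or.inr (Or.inr (Or.inl ⟨by omega, rfl⟩)),
      Or.inr (by simp only [hb]; push_cast; omega)⟩)
  by_cases c1 : y < 2 * q + 1
  · exact Or.inr (Or.inr ⟨(4 * q + 1 - (y)), by omega, _, 0, Or.inr (Or.inr (Or.inl ⟨by omega, rfl⟩)),
      Or.inl (by simp only [hb]; push_cast; omega)⟩)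
  by_cases c2 : y < 2 * q + 2
  · exact Or.inr (Or.inr ⟨(4 * q + 1), by omega, _, 0, Or.inr (Or.inl rfl),
      Or.inl (by simp only [hb]; push_cast; omega)⟩)
  by_cases c3 : y < 4 * q + 2
  · exact Or.inr (Or.inr ⟨(4 * q + 1 - (y)), by omega, _, 0, Or.inr (Or.inr (Or.inl ⟨by omega, rfl⟩)),
      Or.inr (by simp only [hb]; push_cast; omega)⟩)
  by_cases c4 : y < 4 * q + 2 + G
  · omega
  by_cases c5 : y < 5 * q + 3 + G
  · exact Or.inr (Or.inr ⟨(2 * y - (8 * q + 4 + 2 * G)), by omega, _, 0, Or.inr (Or.inl rfl),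
      Or.inl (by simp only [hb]; push_cast; omega)⟩)
  by_cases c6 : y < 6 * q + 3 + G
  · exact Or.inr (Or.inr ⟨(2 * y - (8 * q + 5 + 2 * G)), by omega, _, 0, Or.inl rfl,
      Or.inr (by simp only [hb]; push_cast; omega)⟩)
  by_cases c7 : y < 6 * q + 4 + G
  · exact Or.inr (Or.inr ⟨(4 * q + 1), by omega, _, 0, Or.inl rfl,
      Or.inl (by simp only [hb]; push_cast; omega)⟩)
  by_cases c8 : y < 7 * q + 4 + G
  · exact Or.inr (Or.inr ⟨(16 * q + 8 + 2 * G - (2 * y)), by omega, _, 0, Or.inr (Or.inl rfl),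
      Or.inl (by simp only [hb]; push_cast; omega)⟩)
  by_cases c9 : y < 8 * q + 4 + G
  · exact Or.inr (Or.inr ⟨(16 * q + 7 + 2 * G - (2 * y)), by omega, _, 0, Or.inl rfl,
      Or.inr (by simp only [hb]; push_cast; omega)⟩)
  by_cases c10 : y < 8 * q + 4 + 2 * G
  · omega
  by_cases c11 : y < 9 * q + 5 + 2 * G
  · exact Or.inr (Or.inr ⟨(2 * y - (16 * q + 8 + 4 * G)), by omega, _, 0, Or.inl rfl,
      Or.inl (by simp only [hb]; push_cast; omega)⟩)
  by_cases c12 : y < 10 * q + 5 + 2 * G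
  · exact Or.inr (Or.inr ⟨(2 * y - (16 * q + 9 + 4 * G)), by omega, _, 0, Or.inr (Or.inl rfl),
      Or.inr (by simp only [hb]; push_cast; omega)⟩)
  by_cases c13 : y < 10 * q + 6 + 2 * G
  · exact Or.inr (Or.inr ⟨(4 * q + 1), by omega, _, 0, Or.inr (Or.inr (Or.inr (⟨by omega, rfl⟩))),
      Or.inl (by simp only [hb]; push_cast; omega)⟩)
  by_cases c14 : y < 11 * q + 6 + 2 * G
  · exact Or.inr (Or.inr ⟨(24 * q + 12 + 4 * G - (2 * y)), by omega, _, 0, Or.inl rfl,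
      Or.inl (by simp only [hb]; push_cast; omega)⟩)
  by_cases c15 : y < 12 * q + 6 + 2 * G
  · exact Or.inr (Or.inr ⟨(24 * q + 11 + 4 * G - (2 * y)), by omega, _, 0, Or.inr (Or.inl rfl),
      Or.inr (by simp only [hb]; push_cast; omega)⟩)
  exact Or.inr (Or.inr ⟨(4 * q), by omega, _, 1, Or.inr (Or.inr (Or.inl ⟨by omega, rfl⟩)),
    Or.inr (by simp only [hb]; push_cast; omega)⟩)

theorem tri_3 (q G : ℕ) (hq : 0 ≤ q) [NeZero (4 * q + 3)] :
    HB (3 * (4 * q + 3) + 2 * G) (4 * q + 3) 3 (8 * q + 6) (8 * q + 6 + G) G := by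
  obtain ⟨b, hb⟩ : ∃ b : ℕ → ℤ, ∀ x, b x = (if x < 2 * q + 2 then (if x % 2 = 0 then 8 * q + 7 + 2 * G + (x / 2 : ℕ) else 0 - 8 * q - 5 + (x / 2 : ℕ))
      else (if (x - (2 * q + 2)) % 2 = 0 then 0 - 5 * q - 4 - ((x - (2 * q + 2)) / 2 : ℕ) else 11 * q + 8 + 2 * G - ((x - (2 * q + 2)) / 2 : ℕ)) : ℤ) := ⟨_, fun _ => rfl⟩
  refine HB_tri _ _ _ _ _ b (0 - 4 * q - 4 - 2 * G) ?_
  intro y h1 h2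
  by_cases c0 : y < 2 * q + 1
  · exact Or.inr (Or.inr ⟨(4 * q + 2 - (y)), by omega, _, 0, Or.inr (Or.inr (Or.inl ⟨by omega, rfl⟩)),
      Or.inl (by simp only [hb]; push_cast; omega)⟩)
  by_cases c1 : y < 2 * q + 2
  · exact Or.inr (Or.inr ⟨(4 * q + 2), by omega, _, 0, Or.inr (Or.inr (Or.inr (⟨by omega, rfl⟩))),
      Or.inr (by simp only [hb]; push_cast; omega)⟩)
  by_cases c2 : y < 4 * q + 3
  · exact Or.inr (Or.inr ⟨(4 * q + 2 - (y)), by omega, _, 0, Or.inr (Or.inr (Or.inl ⟨by omega, rfl⟩)),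
      Or.inr (by simp only [hb]; push_cast; omega)⟩)
  by_cases c3 : y < 5 * q + 4
  · exact Or.inr (Or.inr ⟨(2 * y - (8 * q + 6)), by omega, _, 0, Or.inr (Or.inl rfl),
      Or.inl (by simp only [hb]; push_cast; omega)⟩)
  by_cases c4 : y < 6 * q + 5
  · exact Or.inr (Or.inr ⟨(2 * y - (8 * q + 6)), by omega, _, 0, Or.inl rfl,
      Or.inr (by simp only [hb]; push_cast; omega)⟩)
  by_cases c5 : y < 7 * q + 5
  · exact Or.inr (Or.inr ⟨(16 * q + 11 - (2 * y)), by omega, _, 0, Or.inr (Or.inl rfl),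
      Or.inl (by simp only [hb]; push_cast; omega)⟩)
  by_cases c6 : y < 8 * q + 6
  · exact Or.inr (Or.inr ⟨(16 * q + 11 - (2 * y)), by omega, _, 0, Or.inl rfl,
      Or.inr (by simp only [hb]; push_cast; omega)⟩)
  by_cases c7 : y < 8 * q + 6 + 2 * G
  · omega
  by_cases c8 : y < 8 * q + 7 + 2 * G
  · exact Or.inr (Or.inr ⟨(2 * q + 1), by omega, _, (-1), Or.inr (Or.inr (Or.inl ⟨by omega, rfl⟩)),
      Or.inl (by simp only [hb]; push_cast; omega)⟩)
  by_cases c9 : y < 9 * q + 8 + 2 * G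
  · exact Or.inr (Or.inr ⟨(2 * y - (16 * q + 14 + 4 * G)), by omega, _, 0, Or.inl rfl,
      Or.inl (by simp only [hb]; push_cast; omega)⟩)
  by_cases c10 : y < 10 * q + 9 + 2 * G
  · exact Or.inr (Or.inr ⟨(2 * y - (16 * q + 14 + 4 * G)), by omega, _, 0, Or.inr (Or.inl rfl),
      Or.inr (by simp only [hb]; push_cast; omega)⟩)
  by_cases c11 : y < 11 * q + 9 + 2 * G
  · exact Or.inr (Or.inr ⟨(24 * q + 19 + 4 * G - (2 * y)), by omega, _, 0, Or.inl rfl,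
      Or.inl (by simp only [hb]; push_cast; omega)⟩)
  exact Or.inr (Or.inr ⟨(24 * q + 19 + 4 * G - (2 * y)), by omega, _, 0, Or.inr (Or.inl rfl),
    Or.inr (by simp only [hb]; push_cast; omega)⟩)

theorem pent_0 (p G : ℕ) (hq : 1 ≤ p) [NeZero (2 * p)] :
    HB (5 * (2 * p) + 2 * G) (2 * p) 5 (6 * p + 1) (6 * p + 1 + G) G := by
  obtain ⟨b, hb⟩ : ∃ b : ℕ → ℤ, ∀ x, b x = (if x % 2 = 0 then 7 * p + 1 + 2 * G + (x / 2 : ℕ)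
      else -(2 * p) - 2 - (x / 2 : ℕ) : ℤ) := ⟨_, fun _ => rfl⟩
  obtain ⟨g, hg⟩ : ∃ g : ℕ → ℤ, ∀ x, g x = (if x % 2 = 0 then 4 * p + 2 + 2 * (x / 2 : ℕ)
      else 6 * p - 1 - 2 * (x / 2 : ℕ) : ℤ) := ⟨_, fun _ => rfl⟩
  refine HB_pent _ _ _ _ _ b g (0 - p) (2 * p + 2 * G - 1) ?_
  intro y h1 h2
  by_cases c0 : y < p + 1
  · exact Or.inr (Or.inr ⟨(2 * p - (2 * y)), by omega, _, 0, Or.inr (Or.inr (Or.inr (Or.inr (Or.inl rfl)))),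
      Or.inr (by simp only [hb, hg]; push_cast; omega)⟩)
  by_cases c1 : y < 2 * p + 1
  · exact Or.inr (Or.inr ⟨(4 * p - (2 * y)), by omega, _, 0, Or.inr (Or.inr (Or.inr (Or.inr (Or.inr (rfl))))),
      Or.inr (by simp only [hb, hg]; push_cast; omega)⟩)
  by_cases c2 : y < 2 * p + 2
  · exact Or.inr (Or.inr ⟨(2 * p - (1)), by omega, _, 0, Or.inr (Or.inr (Or.inr (Or.inl ⟨by omega, rfl⟩))),
      Or.inl (by simp only [hb, hg]; push_cast; omega)⟩)
  by_cases c3 : y < 3 * p + 2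
  · exact Or.inr (Or.inr ⟨(2 * y - (4 * p + 3)), by omega, _, 0, Or.inl rfl,
      Or.inr (by simp only [hb]; push_cast; omega)⟩)
  by_cases c4 : y < 4 * p + 1
  · exact Or.inr (Or.inr ⟨(2 * y - (6 * p + 3)), by omega, _, 0, Or.inr (Or.inr (Or.inl ⟨by omega, rfl⟩)),
      Or.inl (by simp only [hb, hg]; push_cast; omega)⟩)
  by_cases c5 : y < 6 * p + 1
  · rcases Nat.even_or_odd' (y - (4 * p + 1)) with ⟨t, ht | ht⟩
    · exact Or.inr (Or.inr ⟨(6 * p - (y)), by omega, _, 0, Or.inr (Or.inl rfl),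
        Or.inl (by simp only [hg]; push_cast; omega)⟩)
    · exact Or.inr (Or.inr ⟨(y - (4 * p + 2)), by omega, _, 0, Or.inr (Or.inl rfl),
        Or.inl (by simp only [hg]; push_cast; omega)⟩)
  by_cases c6 : y < 6 * p + 1 + 2 * G
  · omega
  by_cases c7 : y < 7 * p + 1 + 2 * G
  · exact Or.inr (Or.inr ⟨(2 * y - (12 * p + 2 + 4 * G)), by omega, _, 1, Or.inr (Or.inr (Or.inl ⟨by omega, rfl⟩)),
      Or.inr (by simp only [hb, hg]; push_cast; omega)⟩)
  by_cases c8 : y < 8 * p + 1 + 2 * G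
  · exact Or.inr (Or.inr ⟨(2 * y - (14 * p + 2 + 4 * G)), by omega, _, 0, Or.inl rfl,
      Or.inl (by simp only [hb]; push_cast; omega)⟩)
  by_cases c9 : y < 9 * p + 1 + 2 * G
  · exact Or.inr (Or.inr ⟨(18 * p + 1 + 4 * G - (2 * y)), by omega, _, 0, Or.inr (Or.inr (Or.inr (Or.inr (Or.inr (rfl))))),
      Or.inl (by simp only [hb, hg]; push_cast; omega)⟩)
  exact Or.inr (Or.inr ⟨(20 * p + 1 + 4 * G - (2 * y)), by omega, _, 0, Or.inr (Or.inr (Or.inr (Or.inr (Or.inl rfl)))),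
    Or.inl (by simp only [hb, hg]; push_cast; omega)⟩)

theorem pent_1 (p G : ℕ) (hq : 1 ≤ p) [NeZero (2 * p + 1)] :
    HB (5 * (2 * p + 1) + 2 * G) (2 * p + 1) 5 (2 * p + 2) (2 * p + 2 + G) G := by
  obtain ⟨b, hb⟩ : ∃ b : ℕ → ℤ, ∀ x, b x = (if x < 2 * p then (if x % 2 = 0 then (x / 2 : ℕ) - (5 * p + 3 + 2 * G)
      else -(6 * p + 5 + 2 * G) - (x / 2 : ℕ)) else -(6 * p + 4 + 2 * G) : ℤ) := ⟨_, fun _ => rfl⟩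
  obtain ⟨g, hg⟩ : ∃ g : ℕ → ℤ, ∀ x, g x = (if x < 2 * p then (if x % 2 = 0 then 2 * p + 3 + 2 * G + 2 * (x / 2 : ℕ)
      else 4 * p + 2 + 2 * G - 2 * (x / 2 : ℕ)) else 2 * p + 2 + 2 * G : ℤ) := ⟨_, fun _ => rfl⟩
  refine HB_pent _ _ _ _ _ b g (0 - 9 * p - 5 - 2 * G) (0 - 9 * p - 7 - 4 * G) ?_
  intro y h1 h2
  by_cases c0 : y < p + 1
  · exact Or.inr (Or.inr ⟨(2 * p + 1 - (2 * y)), by omega, _, 0, Or.inr (Or.inr (Or.inr (Or.inr (Or.inl rfl)))),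
      Or.inl (by simp only [hb, hg]; push_cast; omega)⟩)
  by_cases c1 : y < p + 2
  · exact Or.inr (Or.inr ⟨(2 * p), by omega, _, 0, Or.inr (Or.inr (Or.inr (Or.inr (Or.inl rfl)))),
      Or.inr (by simp only [hb, hg]; push_cast; omega)⟩)
  by_cases c2 : y < 2 * p + 2
  · exact Or.inr (Or.inr ⟨(4 * p + 2 - (2 * y)), by omega, _, 0, Or.inr (Or.inr (Or.inr (Or.inr (Or.inl rfl)))),
      Or.inr (by simp only [hb, hg]; push_cast; omega)⟩)
  by_cases c3 : y < 2 * p + 2 + 2 * G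
  · omega
  by_cases c4 : y < 2 * p + 3 + 2 * G
  · exact Or.inr (Or.inr ⟨(2 * p), by omega, _, 0, Or.inr (Or.inl rfl),
      Or.inl (by simp only [hg]; push_cast; omega)⟩)
  by_cases c5 : y < 4 * p + 3 + 2 * G
  · rcases Nat.even_or_odd' (y - (2 * p + 3 + 2 * G)) with ⟨t, ht | ht⟩
    · exact Or.inr (Or.inr ⟨(y - (2 * p + 3 + 2 * G)), by omega, _, 0, Or.inr (Or.inl rfl),
        Or.inl (by simp only [hg]; push_cast; omega)⟩)
    · exact Or.inr (Or.inr ⟨(4 * p + 3 + 2 * G - (y)), by omega, _, 0, Or.inr (Or.inl rfl),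
        Or.inl (by simp only [hg]; push_cast; omega)⟩)
  by_cases c6 : y < 4 * p + 4 + 2 * G
  · exact Or.inr (Or.inr ⟨(2 * p - (1)), by omega, _, 0, Or.inr (Or.inr (Or.inl ⟨by omega, rfl⟩)),
      Or.inl (by simp only [hb, hg]; push_cast; omega)⟩)
  by_cases c7 : y < 5 * p + 4 + 2 * G
  · exact Or.inr (Or.inr ⟨(10 * p + 6 + 4 * G - (2 * y)), by omega, _, 0, Or.inl rfl,
      Or.inr (by simp only [hb]; push_cast; omega)⟩)
  by_cases c8 : y < 5 * p + 5 + 2 * G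
  · exact Or.inr (Or.inr ⟨(2 * p), by omega, _, 0, Or.inr (Or.inr (Or.inr (Or.inl ⟨by omega, rfl⟩))),
      Or.inl (by simp only [hb, hg]; push_cast; omega)⟩)
  by_cases c9 : y < 6 * p + 4 + 2 * G
  · exact Or.inr (Or.inr ⟨(2 * y - (10 * p + 9 + 4 * G)), by omega, _, 0, Or.inr (Or.inr (Or.inl ⟨by omega, rfl⟩)),
      Or.inl (by simp only [hb, hg]; push_cast; omega)⟩)
  by_cases c10 : y < 6 * p + 5 + 2 * G
  · exact Or.inr (Or.inr ⟨(2 * p), by omega, _, 0, Or.inl rfl,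
      Or.inr (by simp only [hb]; push_cast; omega)⟩)
  by_cases c11 : y < 7 * p + 5 + 2 * G
  · exact Or.inr (Or.inr ⟨(2 * y - (12 * p + 9 + 4 * G)), by omega, _, 0, Or.inl rfl,
      Or.inr (by simp only [hb]; push_cast; omega)⟩)
  by_cases c12 : y < 8 * p + 5 + 2 * G
  · exact Or.inr (Or.inr ⟨(16 * p + 8 + 4 * G - (2 * y)), by omega, _, 0, Or.inr (Or.inr (Or.inl ⟨by omega, rfl⟩)),
      Or.inl (by simp only [hb, hg]; push_cast; omega)⟩)
  by_cases c13 : y < 9 * p + 5 + 2 * G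
  · exact Or.inr (Or.inr ⟨(2 * y - (16 * p + 9 + 4 * G)), by omega, _, 0, Or.inr (Or.inr (Or.inr (Or.inr (Or.inr (rfl))))),
      Or.inr (by simp only [hb, hg]; push_cast; omega)⟩)
  by_cases c14 : y < 10 * p + 5 + 2 * G
  · exact Or.inr (Or.inr ⟨(2 * y - (18 * p + 10 + 4 * G)), by omega, _, (-1), Or.inr (Or.inr (Or.inr (Or.inr (Or.inr (rfl))))),
      Or.inl (by simp only [hb, hg]; push_cast; omega)⟩)
  exact Or.inr (Or.inr ⟨(2 * p), by omega, _, (-1), Or.inr (Or.inr (Or.inr (Or.inr (Or.inr (rfl))))),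
    Or.inl (by simp only [hb, hg]; push_cast; omega)⟩)

theorem HA_suff (n k : ℕ) (h3 : 3 ≤ k) (hkn : k ≤ n) : HA n k := by
  have : NeZero n := ⟨by omega⟩
  have hc : k % 4 = 0 ∨ k % 4 = 1 ∨ k % 4 = 2 ∨ k % 4 = 3 := by omega
  rcases hc with hc | hc | hc | hc
  · obtain ⟨m, rfl⟩ : ∃ m, k = 0 + 4 * m := ⟨k / 4, by omega⟩
    refine HA_of_base n 0 m hkn fun G => ⟨1, 1 + G, ?_⟩
    have h := HB_zero n G
    have e : 0 * n + 2 * G = 2 * G := by omega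
    rw [e]
    exact h
  · obtain ⟨m, rfl⟩ : ∃ m, k = 5 + 4 * m := ⟨k / 4 - 1, by omega⟩
    refine HA_of_base n 5 m hkn fun G => ?_
    rcases Nat.even_or_odd' n with ⟨p, hp | hp⟩
    · subst hp
      exact ⟨_, _, pent_0 p G (by omega)⟩
    · subst hp
      exact ⟨_, _, pent_1 p G (by omega)⟩
  · obtain ⟨m, rfl⟩ : ∃ m, k = 6 + 4 * m := ⟨k / 4 - 1, by omega⟩
    exact HA_of_base n 6 m hkn fun G => ⟨_, _, HB_six n G⟩
  · obtain ⟨m, rfl⟩ : ∃ m, k = 3 + 4 * m := ⟨k / 4, by omega⟩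
    refine HA_of_base n 3 m hkn fun G => ?_
    have hr : n = 4 * (n / 4) ∨ n = 4 * (n / 4) + 1 ∨ n = 4 * (n / 4) + 2 ∨
        n = 4 * (n / 4) + 3 := by omega
    generalize n / 4 = q at hr
    rcases hr with hr | hr | hr | hr
    · subst hr
      exact ⟨_, _, tri_0 q G (by omega)⟩
    · subst hr
      exact ⟨_, _, tri_1 q G (by omega)⟩
    · subst hr
      exact ⟨_, _, tri_2 q G (by omega)⟩
    · subst hr
      exact ⟨_, _, tri_3 q G (by omega)⟩

/-- There exists a Heffter array `H(n;k)` if and only if `3 ≤ k ≤ n`. -/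
theorem heffter_array_square_exists_iff (n k : ℕ) (hn : 0 < n) (hk : 0 < k) :
    (∃ A : Fin n → Fin n → Option (ZMod (2 * n * k + 1)),
      (∀ i : Fin n, (Finset.univ.filter fun j : Fin n => (A i j).isSome).card = k) ∧
      (∀ j : Fin n, (Finset.univ.filter fun i : Fin n => (A i j).isSome).card = k) ∧
      (∀ i : Fin n, ∑ j : Fin n, (A i j).getD 0 = 0) ∧
      (∀ j : Fin n, ∑ i : Fin n, (A i j).getD 0 = 0) ∧
      (∀ x : ZMod (2 * n * k + 1), x ≠ 0 →
        ∃! p : Fin n × Fin n, A p.1 p.2 = some x ∨ A p.1 p.2 = some (-x)))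
    ↔ (3 ≤ k ∧ k ≤ n) := by
  exact ⟨fun h => HA_nec n k hn hk h, fun h => HA_suff n k h.1 h.2⟩
end

section
/- Let p be an odd prime and let r be an element of ZMod p with r ≠ 0 and r ≠ 1. Define f : ZMod p → ZMod p → ZMod p by f(i,j) = j + (i - j) * r⁻¹. Then for all i, j, k ∈ ZMod p, f(f(i,j), k) = f(i, f(j,k)) if and only if i = k. -/
/-- The entry `H_{p,r}[i,j] = j + (i - j) * r⁻¹` of the array `H_{p,r}`. -/
def Hpr {p : ℕ} (r : ZMod p) (i j : ZMod p) : ZMod p := j + (i - j) * r⁻¹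

/-- For an odd prime `p` and `r ∈ ZMod p` with `r ≠ 0`, `r ≠ 1`, the operation
`f(i,j) = j + (i - j) * r⁻¹` associates on `(i,j,k)` if and only if `i = k`. -/
theorem Hpr_assoc_iff (p : ℕ) (hp : p.Prime) (hodd : p ≠ 2) (r : ZMod p)
    (hr0 : r ≠ 0) (hr1 : r ≠ 1) :
    ∀ i j k : ZMod p, Hpr r (Hpr r i j) k = Hpr r i (Hpr r j k) ↔ i = k := by
  haveI := Fact.mk hp
  intro i j k
  have hs0 : r⁻¹ ≠ 0 := inv_ne_zero hr0
  have hs1 : 1 - r⁻¹ ≠ 0 := by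
    intro h
    exact hr1 (inv_eq_one.mp (sub_eq_zero.mp h).symm)
  have key : Hpr r (Hpr r i j) k - Hpr r i (Hpr r j k) = r⁻¹ * (1 - r⁻¹) * (k - i) := by
    unfold Hpr
    ring
  rw [← sub_eq_zero, key, mul_eq_zero, sub_eq_zero]
  constructor
  · rintro (h | h)
    · exact absurd h (mul_ne_zero hs0 hs1)
    · exact h.symm
  · intro h
    exact Or.inr h.symm
end

section
/- Let p be an odd prime and let r be an element of ZMod p with r ≠ 0 and r ≠ 1. Define the sequence c : ℕ → ZMod p by c 1 = 0 and c (ℓ+1) = (ℓ : ZMod p) + (c ℓ - (ℓ : ZMod p)) * r⁻¹ for ℓ ≥ 1. Then for every integer ℓ ≥ 1, c ℓ = ((r⁻¹)^(ℓ-1) - 1) * (r - 1)⁻¹ + ((ℓ : ZMod p) - 1). -/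
/-- Closed formula for the partial natural sums in the loop `L_{p,r}`:
if `c 1 = 0` and `c (ℓ+1) = ℓ + (c ℓ - ℓ) * r⁻¹` for `ℓ ≥ 1`, then
`c ℓ = ((r⁻¹)^(ℓ-1) - 1) * (r - 1)⁻¹ + (ℓ - 1)` for all `ℓ ≥ 1`. -/
theorem Lpr_partial_sum_formula (p : ℕ) (hp : p.Prime) (hodd : p ≠ 2)
    (r : ZMod p) (hr0 : r ≠ 0) (hr1 : r ≠ 1)
    (c : ℕ → ZMod p) (hc1 : c 1 = 0)
    (hrec : ∀ ℓ : ℕ, 1 ≤ ℓ → c (ℓ + 1) = (ℓ : ZMod p) + (c ℓ - (ℓ : ZMod p)) * r⁻¹) :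
    ∀ ℓ : ℕ, 1 ≤ ℓ →
      c ℓ = ((r⁻¹) ^ (ℓ - 1) - 1) * (r - 1)⁻¹ + ((ℓ : ZMod p) - 1) := by
  haveI : Fact p.Prime := ⟨hp⟩
  have h1 : (r - 1)⁻¹ * (r - 1) = 1 := inv_mul_cancel₀ (sub_ne_zero.mpr hr1)
  have h2 : r⁻¹ * r = 1 := inv_mul_cancel₀ hr0
  intro ℓ hℓ
  induction ℓ, hℓ using Nat.le_induction with
  | base => simp [hc1]
  | succ n hn ih =>
    rw [hrec n hn, ih]
    obtain ⟨m, rfl⟩ : ∃ m, n = m + 1 := ⟨n - 1, by omega⟩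
    simp only [Nat.add_sub_cancel, pow_succ]
    push_cast
    linear_combination r⁻¹ * h1 - (r - 1)⁻¹ * h2
end

section
/- Let p be an odd prime and let r be a primitive root modulo p (a generator of the group of units of ZMod p). Define the sequence c : ℕ → ZMod p by c 1 = 0 and c (ℓ+1) = (ℓ : ZMod p) + (c ℓ - (ℓ : ZMod p)) * r⁻¹ for ℓ ≥ 1. Then for every integer ℓ with 1 ≤ ℓ ≤ p-2, one has c ℓ ≠ (ℓ : ZMod p); equivalently, ((r⁻¹)^(ℓ-1) - 1) * (r - 1)⁻¹ + ((ℓ : ZMod p) - 1) = (ℓ : ZMod p) holds only when (p-1) divides ℓ. -/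
/-- When `r` is a primitive root modulo the odd prime `p`, the partial natural
sums `c ℓ` (for `1 ≤ ℓ ≤ p-2`) never equal `ℓ`; equivalently, the closed
formula equals `ℓ` only when `p - 1` divides `ℓ`. -/
theorem Lpr_partial_sum_ne (p : ℕ) (hp : p.Prime) (hodd : p ≠ 2)
    (r : ZMod p) (hr : ∀ x : ZMod p, x ≠ 0 → ∃ m : ℕ, r ^ m = x)
    (c : ℕ → ZMod p) (hc1 : c 1 = 0)
    (hrec : ∀ ℓ : ℕ, 1 ≤ ℓ → c (ℓ + 1) = (ℓ : ZMod p) + (c ℓ - (ℓ : ZMod p)) * r⁻¹) :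
    (∀ ℓ : ℕ, 1 ≤ ℓ → ℓ ≤ p - 2 → c ℓ ≠ (ℓ : ZMod p)) ∧
    (∀ ℓ : ℕ, 1 ≤ ℓ →
      ((r⁻¹) ^ (ℓ - 1) - 1) * (r - 1)⁻¹ + ((ℓ : ZMod p) - 1) = (ℓ : ZMod p) →
        (p - 1) ∣ ℓ) := by
  haveI : Fact p.Prime := ⟨hp⟩
  have hp3 : 2 < p := lt_of_le_of_ne hp.two_le (Ne.symm hodd)
  haveI : Fact (2 < p) := ⟨hp3⟩
  have hneg : (-1 : ZMod p) ≠ 1 := ZMod.neg_one_ne_one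
  have hr1 : r ≠ 1 := by
    rintro rfl
    obtain ⟨m, hm⟩ := hr (-1) (by simp)
    rw [one_pow] at hm
    exact hneg hm.symm
  have hr0 : r ≠ 0 := by
    rintro rfl
    obtain ⟨m, hm⟩ := hr (-1) (by simp)
    rcases Nat.eq_zero_or_pos m with h | h
    · subst h
      rw [pow_zero] at hm
      exact hneg hm.symm
    · rw [zero_pow h.ne'] at hm
      simp at hm
  have hr1' : r - 1 ≠ 0 := sub_ne_zero.mpr hr1
  have key : ∀ n : ℕ, r ^ n = 1 → (p - 1) ∣ n := by
    intro n hn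
    have hu : orderOf (Units.mk0 r hr0) = Nat.card (ZMod p)ˣ := by
      apply orderOf_eq_card_of_forall_mem_powers
      intro x
      obtain ⟨m, hm⟩ := hr x x.ne_zero
      exact ⟨m, by ext; simpa using hm⟩
    rw [Nat.card_eq_fintype_card, ZMod.card_units] at hu
    rw [← hu]
    apply orderOf_dvd_of_pow_eq_one
    ext
    simpa using hn
  have key2 : ∀ ℓ : ℕ, 1 ≤ ℓ →
      ((r⁻¹) ^ (ℓ - 1) - 1) * (r - 1)⁻¹ + ((ℓ : ZMod p) - 1) = (ℓ : ZMod p) →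
        (p - 1) ∣ ℓ := by
    intro ℓ hℓ h
    apply key
    obtain ⟨k, rfl⟩ := Nat.exists_eq_add_of_le' hℓ
    rw [Nat.add_sub_cancel] at h
    have h1 : ((r⁻¹) ^ k - 1) * (r - 1)⁻¹ = 1 := by linear_combination h
    rw [mul_inv_eq_one₀ hr1'] at h1
    have h2 : (r⁻¹) ^ k = r := by linear_combination h1
    have h3 : r ^ k * (r⁻¹) ^ k = 1 := by
      rw [← mul_pow, mul_inv_cancel₀ hr0, one_pow]
    rw [h2] at h3
    rw [pow_succ, h3]
  refine ⟨?_, key2⟩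
  have hcl : ∀ k : ℕ, c (k + 1) =
      ((r⁻¹) ^ k - 1) * (r - 1)⁻¹ + (((k + 1 : ℕ) : ZMod p) - 1) := by
    intro k
    induction k with
    | zero => simp [hc1]
    | succ k ih =>
      rw [hrec (k + 1) (by omega), ih, pow_succ]
      push_cast
      field_simp
      ring
  intro ℓ h1 h2 h
  have h3 : (p - 1) ∣ ℓ := by
    apply key2 ℓ h1
    obtain ⟨k, rfl⟩ := Nat.exists_eq_add_of_le' h1
    rw [Nat.add_sub_cancel, ← hcl k, h]
  have := Nat.le_of_dvd h1 h3
  omega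
end

section
/- Let p be an odd prime and let r be an element of ZMod p with r ≠ 0 and r ≠ 1, and let a, b ∈ ZMod p with a ≠ 0. Define sequences c, d : ℕ → ZMod p by c 1 = 0, c (ℓ+1) = (ℓ : ZMod p) + (c ℓ - (ℓ : ZMod p)) * r⁻¹, and d 1 = b, d (ℓ+1) = (a*(ℓ : ZMod p) + b) + (d ℓ - (a*(ℓ : ZMod p) + b)) * r⁻¹, for ℓ ≥ 1. Then d ℓ = a * (c ℓ) + b for every integer ℓ ≥ 1. In particular, since c (p-1) = -1, also d (p-1) = b - a, so the natural sum of the permuted symbols π_{(a,b)}(1),…,π_{(a,b)}(p) in the loop L_{p,r} is also zero. -/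
/-- The affine permutation `π_{(a,b)}` transports the partial natural sums of
`L_{p,r}`: if `c` records the partial sums of the unpermuted symbols and `d`
those of the permuted symbols, then `d ℓ = a * c ℓ + b` for all `ℓ ≥ 1`; in
particular `d (p-1) = b - a`, so the natural sum of the permuted symbols in
`L_{p,r}` is also zero. -/
theorem Lpr_permuted_partial_sums (p : ℕ) (hp : p.Prime) (hodd : p ≠ 2)
    (r : ZMod p) (hr0 : r ≠ 0) (hr1 : r ≠ 1)
    (a b : ZMod p) (ha : a ≠ 0)
    (c d : ℕ → ZMod p) (hc1 : c 1 = 0)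
    (hcrec : ∀ ℓ : ℕ, 1 ≤ ℓ → c (ℓ + 1) = (ℓ : ZMod p) + (c ℓ - (ℓ : ZMod p)) * r⁻¹)
    (hd1 : d 1 = b)
    (hdrec : ∀ ℓ : ℕ, 1 ≤ ℓ →
      d (ℓ + 1) = (a * (ℓ : ZMod p) + b) + (d ℓ - (a * (ℓ : ZMod p) + b)) * r⁻¹) :
    (∀ ℓ : ℕ, 1 ≤ ℓ → d ℓ = a * c ℓ + b) ∧ d (p - 1) = b - a := by
  haveI : Fact p.Prime := ⟨hp⟩
  have h1 : ∀ ℓ : ℕ, 1 ≤ ℓ → d ℓ = a * c ℓ + b := by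
    intro ℓ hℓ
    induction ℓ, hℓ using Nat.le_induction with
    | base => rw [hd1, hc1]; ring
    | succ n hn ih => rw [hdrec n hn, hcrec n hn, ih]; ring
  have h2 : ∀ ℓ : ℕ, 1 ≤ ℓ →
      (r⁻¹ - 1) * c ℓ = (r⁻¹ - 1) * (ℓ : ZMod p) + 1 - r⁻¹ ^ ℓ := by
    intro ℓ hℓ
    induction ℓ, hℓ using Nat.le_induction with
    | base => rw [hc1]; push_cast; ring
    | succ n hn ih =>
      rw [hcrec n hn]
      push_cast
      linear_combination r⁻¹ * ih
  have hp1 : 1 ≤ p - 1 := by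
    have := hp.two_le
    omega
  have hs : r⁻¹ - 1 ≠ 0 := by
    intro h
    exact hr1 (inv_eq_one.mp (sub_eq_zero.mp h))
  have hc : c (p - 1) = -1 := by
    have h := h2 (p - 1) hp1
    rw [ZMod.pow_card_sub_one_eq_one (inv_ne_zero hr0), Nat.cast_sub hp.one_le,
      ZMod.natCast_self] at h
    apply mul_left_cancel₀ hs
    rw [h]
    push_cast
    ring
  refine ⟨h1, ?_⟩
  rw [h1 _ hp1, hc]
  ring
end

section
/- Let k be a positive integer. There exists an idempotent Latin square of order k — that is, a function L : Fin k → Fin k → Fin k such that for every i the map j ↦ L i j is a bijection of Fin k, for every j the map i ↦ L i j is a bijection of Fin k, and L i i = i for every i — if and only if k ≠ 2. -/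
theorem ils_transfer {α : Type*} [Fintype α] (k : ℕ) (hc : Fintype.card α = k)
    (M : α → α → α) (hr : ∀ i j j', M i j = M i j' → j = j')
    (hcl : ∀ j i i', M i j = M i' j → i = i') (hd : ∀ i, M i i = i) :
    ∃ L : Fin k → Fin k → Fin k,
      (∀ i : Fin k, Function.Bijective fun j : Fin k => L i j) ∧
      (∀ j : Fin k, Function.Bijective fun i : Fin k => L i j) ∧
      (∀ i : Fin k, L i i = i) := by
  let e := Fintype.equivFinOfCardEq hc
  refine ⟨fun i j => e (M (e.symm i) (e.symm j)), fun i => ?_, fun j => ?_, fun i => ?_⟩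
  · apply Finite.injective_iff_bijective.1
    intro j j' h
    exact e.symm.injective (hr _ _ _ (e.injective h))
  · apply Finite.injective_iff_bijective.1
    intro j j' h
    exact e.symm.injective (hcl _ _ _ (e.injective h))
  · simp [hd]

theorem ils_two_cancel (n : ℕ) (hn : Odd n) (a b : ZMod n) (h : 2 * a = 2 * b) : a = b := by
  have hu : IsUnit ((2 : ℕ) : ZMod n) :=
    (ZMod.isUnit_iff_coprime 2 n).2 (Nat.coprime_two_left.2 hn)
  push_cast at hu
  exact hu.mul_left_cancel h

def ilsM (n : ℕ) : Option (ZMod n) → Option (ZMod n) → Option (ZMod n)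
  | some i, some j => if j = i + 1 then none else some (2 * i - j)
  | some i, none => some (i - 1)
  | none, some j => some (j - 2)
  | none, none => none

/-- An idempotent Latin square of order `k` exists if and only if `k ≠ 2`. -/
theorem idempotent_latin_square_exists_iff (k : ℕ) (hk : 0 < k) :
    (∃ L : Fin k → Fin k → Fin k,
      (∀ i : Fin k, Function.Bijective fun j : Fin k => L i j) ∧
      (∀ j : Fin k, Function.Bijective fun i : Fin k => L i j) ∧
      (∀ i : Fin k, L i i = i))
    ↔ k ≠ 2 := by
  constructor
  · rintro ⟨L, hr, hc, hd⟩ rfl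
    have h1 : L 0 1 ≠ L 0 0 := fun h => absurd ((hr 0).1 h) (by decide)
    have h2 : L 0 1 ≠ L 1 1 := fun h => absurd ((hc 1).1 h) (by decide)
    rw [hd] at h1 h2
    omega
  · intro h2
    rcases Nat.even_or_odd k with he | ho
    · obtain ⟨n, rfl⟩ : ∃ n, k = n + 1 := ⟨k - 1, by omega⟩
      have hn : Odd n := by
        rcases Nat.even_or_odd n with h | h
        · exact absurd he (by simpa using h.add_one)
        · exact h
      have hn1 : n ≠ 1 := by omega
      have : NeZero n := ⟨by rintro rfl; simp at hn⟩
      have : Fact (1 < n) := ⟨by have := NeZero.ne n; omega⟩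
      have tc := ils_two_cancel n hn
      refine ils_transfer (α := Option (ZMod n)) _ (by simp [ZMod.card]) (ilsM n) ?_ ?_ ?_
      · rintro (_ | i) (_ | j) (_ | j') h <;> simp only [ilsM] at h
        · rfl
        · simp at h
        · simp at h
        · simpa using h
        · rfl
        · split_ifs at h with h1
          exact absurd (by linear_combination Option.some.inj h) h1
        · split_ifs at h with h1
          exact absurd (by linear_combination - Option.some.inj h) h1
        · split_ifs at h with h1 h3 h3
          · rw [h1, h3]
          · congr 1
            linear_combination - Option.some.inj h
      · rintro (_ | j) (_ | i) (_ | i') h <;> simp only [ilsM] at h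
        · rfl
        · simp at h
        · simp at h
        · simpa using h
        · rfl
        · split_ifs at h with h1
          have := tc (i' + 1) j (by linear_combination - Option.some.inj h)
          exact absurd this.symm h1
        · split_ifs at h with h1
          have := tc (i + 1) j (by linear_combination Option.some.inj h)
          exact absurd this.symm h1
        · split_ifs at h with h1 h3 h3
          · congr 1
            linear_combination h3 - h1
          · congr 1
            exact tc _ _ (by linear_combination Option.some.inj h)
      · rintro (_ | i)
        · rfl
        · simp [ilsM]
          ring
    · have : NeZero k := ⟨hk.ne'⟩
      have tc := ils_two_cancel k ho
      refine ils_transfer (α := ZMod k) _ (ZMod.card k) (fun i j => 2 * i - j) ?_ ?_ ?_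
      · intro i j j' h
        linear_combination - h
      · intro j i i' h
        exact tc _ _ (by linear_combination h)
      · intro i
        ring
end
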